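/- arXiv:2402.11529 — 3 statements merged into one kernel-verified Lean document; each statement's English description precedes it below -/
import Mathlib

section
/- Let n ≥ 0 be an integer and let q be a complex number such that q^j ≠ 1 for all 1 ≤ j ≤ 2n+1. Suppose (α_k)_{k=0}^{n} and (β_k)_{k=0}^{n} satisfy the Bailey pair relation relative to (q,q): β_j = Σ_{k=0}^{j} α_k/((q;q)_{j−k}(q²;q)_{j+k}) for all 0 ≤ j ≤ n. Then (q²;q)_n · Σ_{k=0}^{n} (q^{−n};q)_k (−1)^k q^{k(k+1)/2 + (n+1)k} β_k = Σ_{k=0}^{n} [(q^{−n};q)_k/(q^{n+2};q)_k] (−1)^k q^{k(k+1)/2 + (n+1)k} α_k. -/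
open Finset

/-- The q-Pochhammer symbol `(x;q)_n = ∏_{j=0}^{n-1} (1 - x q^j)`. -/
noncomputable def qPoch (x q : ℂ) (n : ℕ) : ℂ := ∏ j ∈ Finset.range n, (1 - x * q ^ j)

/-!
Bailey's lemma with both parameters sent to infinity turns a Bailey pair relative to `a` into
`∑ aʲ q^{j²} βⱼ / (q)_{n-j} = ∑ aᵏ q^{k²} αₖ / ((q)_{n-k} (aq)_{n+k})`. It is an interchange of
summations, after which the inner sum is a limit of the `q`-Chu–Vandermonde sum with `a` replaced
by `a q^{2k}`. Multiplying by `(q)_n (aq)_n` gives the claim, because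
`(q)_n q^{j²} / (q)_{n-j}` equals `(q^{-n})_j (-1)ʲ q^{j(j+1)/2 + nj}`; the theorem is the case
`a = q`.
-/

/-- `α` and `β` form a Bailey pair relative to `(a, q)` as far as the indices `0, …, n` go; the
values of `α` and `β` beyond `n` are unconstrained. -/
def IsBaileyPairUpTo (a q : ℂ) (n : ℕ) (α β : ℕ → ℂ) : Prop :=
  ∀ j ≤ n, β j = ∑ k ∈ range (j + 1), α k / (qPoch q q (j - k) * qPoch (a * q) q (j + k))

section qPoch

variable {x q : ℂ} {m n : ℕ}

@[simp]
lemma qPoch_zero (x q : ℂ) : qPoch x q 0 = 1 := prod_range_zero _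

lemma qPoch_succ (x q : ℂ) (n : ℕ) : qPoch x q (n + 1) = qPoch x q n * (1 - x * q ^ n) :=
  prod_range_succ _ n

lemma qPoch_add (x q : ℂ) (m n : ℕ) :
    qPoch x q (m + n) = qPoch x q m * qPoch (x * q ^ m) q n := by
  simp only [qPoch, prod_range_add, pow_add, mul_assoc]

lemma qPoch_succ' (x q : ℂ) (n : ℕ) : qPoch x q (n + 1) = (1 - x) * qPoch (x * q) q n := by
  simp [add_comm n, qPoch_add, qPoch_succ]

lemma qPoch_self_succ (q : ℂ) (n : ℕ) : qPoch q q (n + 1) = qPoch q q n * (1 - q ^ (n + 1)) := by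
  rw [qPoch_succ, pow_succ']

lemma qPoch_ne_zero_iff : qPoch x q n ≠ 0 ↔ ∀ i < n, x * q ^ i ≠ 1 := by
  simp only [qPoch, prod_ne_zero_iff, mem_range, sub_ne_zero, ne_comm (a := (1 : ℂ))]

lemma qPoch_ne_zero_of_le (hmn : m ≤ n) (h : qPoch x q n ≠ 0) : qPoch x q m ≠ 0 :=
  qPoch_ne_zero_iff.2 fun i hi => qPoch_ne_zero_iff.1 h i (hi.trans_le hmn)

lemma one_sub_pow_ne_zero_of_qPoch (h : qPoch q q n ≠ 0) (hm : m < n) : 1 - q ^ (m + 1) ≠ 0 :=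
  right_ne_zero_of_mul (qPoch_self_succ q m ▸ qPoch_ne_zero_of_le hm h)

lemma qPoch_zpow_neg_mul_qPoch (q : ℂ) {j : ℕ} (hj : j ≤ n) :
    qPoch (q ^ (-(n : ℤ))) q j * (-1) ^ j * q ^ (j * (j + 1) / 2 + n * j) * qPoch q q (n - j) =
      qPoch q q n * q ^ j ^ 2 := by
  induction j with
  | zero => simp
  | succ j ih =>
    obtain ⟨d, rfl⟩ := Nat.exists_eq_add_of_le' hj
    have hd : d + (j + 1) - j = d + 1 := by omega
    specialize ih (by omega)
    have htriangle : (j + 1) * (j + 1 + 1) / 2 = j * (j + 1) / 2 + (j + 1) := by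
      simpa only [mul_comm, Nat.add_sub_cancel] using Nat.triangle_succ (j + 1)
    rw [hd, qPoch_self_succ] at ih
    rw [Nat.add_sub_cancel, htriangle, qPoch_succ _ q j]
    obtain rfl | hq := eq_or_ne q 0
    · -- `0 ^ (-n)` is the junk value `0⁻¹ = 0`, but a positive power of `q` kills both sides.
      simp
    have hcancel : q ^ (-((d + (j + 1) : ℕ) : ℤ)) * q ^ j * q ^ (d + 1) = 1 := by
      rw [mul_assoc, ← pow_add, zpow_neg, zpow_natCast, show j + (d + 1) = d + (j + 1) by omega]
      exact inv_mul_cancel₀ (pow_ne_zero _ hq)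
    generalize q ^ (-((d + (j + 1) : ℕ) : ℤ)) = z at *
    generalize j * (j + 1) / 2 = t at *
    linear_combination q ^ (2 * j + 1) * ih +
      qPoch z q j * (-1) ^ j * q ^ (t + (d + (j + 1)) * j) * q ^ (2 * j + 1) * qPoch q q d * hcancel

end qPoch

section Vandermonde

variable {a q : ℂ}

-- The `q`-Pascal rule `1 - qᵐ = (1 - q^{m-i}) + q^{m-i} (1 - qⁱ)`, summed against `f`.
lemma one_sub_pow_mul_sum_range_succ {R : Type*} [CommRing R] (q : R) (m : ℕ) (f : ℕ → R) :
    (1 - q ^ m) * ∑ i ∈ range (m + 1), f i =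
      ∑ i ∈ range m, (1 - q ^ (m - i)) * f i +
        ∑ i ∈ range m, q ^ (m - (i + 1)) * (1 - q ^ (i + 1)) * f (i + 1) := by
  calc _ = ∑ i ∈ range (m + 1), (1 - q ^ (m - i)) * f i +
          ∑ i ∈ range (m + 1), q ^ (m - i) * (1 - q ^ i) * f i := by
        rw [mul_sum, ← sum_add_distrib]
        refine sum_congr rfl fun i hi => ?_
        rw [← pow_sub_mul_pow q (mem_range_succ_iff.1 hi)]
        ring
    _ = _ := by
        rw [sum_range_succ, sum_range_succ' _ m]
        simp only [Nat.sub_self, pow_zero, sub_self, zero_mul, mul_zero, add_zero]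

/-- The left-hand side of the limiting `q`-Chu–Vandermonde identity,
`∑ aⁱ q^{i²} / ((q)ᵢ (q)_{m-i} (aq)ᵢ)`. -/
noncomputable def vandermondeSum (a q : ℂ) (m : ℕ) : ℂ :=
  ∑ i ∈ range (m + 1), a ^ i * q ^ i ^ 2 / (qPoch q q i * qPoch q q (m - i) * qPoch (a * q) q i)

lemma one_sub_pow_mul_vandermondeSum_succ {m : ℕ} (hq : qPoch q q (m + 1) ≠ 0) :
    (1 - q ^ (m + 1)) * vandermondeSum a q (m + 1) =
      vandermondeSum a q m + a * q ^ (m + 1) / (1 - a * q) * vandermondeSum (a * q) q m := by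
  simp only [vandermondeSum, one_sub_pow_mul_sum_range_succ, mul_sum (s := range (m + 1))]
  congr 1
  · refine sum_congr rfl fun i hi => ?_
    have hne := one_sub_pow_ne_zero_of_qPoch hq (Nat.sub_lt_succ m i)
    rw [Nat.sub_add_comm (mem_range_succ_iff.1 hi), qPoch_self_succ]
    field_simp
  · refine sum_congr rfl fun i hi => ?_
    have hne := one_sub_pow_ne_zero_of_qPoch hq (mem_range.1 hi)
    obtain ⟨d, rfl⟩ := Nat.exists_eq_add_of_le (mem_range_succ_iff.1 hi)
    rw [Nat.add_sub_add_right, Nat.add_sub_cancel_left, qPoch_self_succ, qPoch_succ' (a * q)]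
    field_simp
    ring

theorem vandermondeSum_eq {m : ℕ} (hq : qPoch q q m ≠ 0) (ha : qPoch (a * q) q m ≠ 0) :
    vandermondeSum a q m = 1 / (qPoch q q m * qPoch (a * q) q m) := by
  induction m generalizing a with
  | zero => simp [vandermondeSum]
  | succ m ih =>
    have hrec := one_sub_pow_mul_vandermondeSum_succ (a := a) hq
    have hfirst : qPoch (a * q) q (m + 1) = (1 - a * q) * qPoch (a * q * q) q m := qPoch_succ' ..
    have hlast : qPoch (a * q) q (m + 1) = qPoch (a * q) q m * (1 - a * q * q ^ m) := qPoch_succ ..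
    obtain ⟨hqm, hq₁⟩ := mul_ne_zero_iff.1 (qPoch_self_succ q m ▸ hq)
    obtain ⟨ha₁, ham'⟩ := mul_ne_zero_iff.1 (hfirst ▸ ha)
    obtain ⟨ham, ha₂⟩ := mul_ne_zero_iff.1 (hlast ▸ ha)
    rw [ih hqm ham, ih hqm ham'] at hrec
    refine mul_left_cancel₀ hq₁ ?_
    calc _ = (1 / qPoch (a * q) q m +
            a * q ^ (m + 1) / ((1 - a * q) * qPoch (a * q * q) q m)) / qPoch q q m := by
          rw [hrec]
          field_simp
      _ = 1 / qPoch (a * q) q (m + 1) / qPoch q q m := by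
          rw [← hfirst, hlast]
          field_simp
          ring
      _ = _ := by
          rw [qPoch_self_succ]
          field_simp

end Vandermonde

section BaileyLemma

variable {a q : ℂ} {n : ℕ} {α β : ℕ → ℂ}

lemma sum_Ico_bailey_kernel {k : ℕ} (hk : k ≤ n) (hq : qPoch q q (n - k) ≠ 0)
    (ha : qPoch (a * q) q (n + k) ≠ 0) :
    ∑ j ∈ Ico k (n + 1),
        a ^ j * q ^ j ^ 2 / (qPoch q q (n - j) * (qPoch q q (j - k) * qPoch (a * q) q (j + k))) =
      a ^ k * q ^ k ^ 2 / (qPoch q q (n - k) * qPoch (a * q) q (n + k)) := by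
  obtain ⟨m, rfl⟩ := Nat.exists_eq_add_of_le hk
  have hsplit (i : ℕ) : qPoch (a * q) q (k + i + k) =
      qPoch (a * q) q (2 * k) * qPoch (a * q ^ (2 * k) * q) q i := by
    rw [show k + i + k = 2 * k + i by omega, qPoch_add, mul_right_comm]
  rw [Nat.add_sub_cancel_left] at hq ⊢
  have ham : qPoch (a * q ^ (2 * k) * q) q m ≠ 0 :=
    right_ne_zero_of_mul (hsplit m ▸ ha)
  calc _ = a ^ k * q ^ k ^ 2 / qPoch (a * q) q (2 * k) * vandermondeSum (a * q ^ (2 * k)) q m := by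
        rw [sum_Ico_eq_sum_range, show k + m + 1 - k = m + 1 by omega, vandermondeSum, mul_sum]
        refine sum_congr rfl fun i _ => ?_
        rw [hsplit, Nat.add_sub_add_left, Nat.add_sub_cancel_left, div_mul_div_comm]
        congr 1 <;> ring
    _ = _ := by
        rw [vandermondeSum_eq hq ham, hsplit, div_mul_div_comm]
        congr 1 <;> ring

theorem IsBaileyPairUpTo.bailey_lemma (h : IsBaileyPairUpTo a q n α β) (hq : qPoch q q n ≠ 0)
    (ha : qPoch (a * q) q (2 * n) ≠ 0) :
    ∑ j ∈ range (n + 1), a ^ j * q ^ j ^ 2 / qPoch q q (n - j) * β j =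
      ∑ k ∈ range (n + 1),
        a ^ k * q ^ k ^ 2 / (qPoch q q (n - k) * qPoch (a * q) q (n + k)) * α k := by
  calc _ = ∑ j ∈ range (n + 1), ∑ k ∈ range (j + 1),
          a ^ j * q ^ j ^ 2 / (qPoch q q (n - j) *
            (qPoch q q (j - k) * qPoch (a * q) q (j + k))) * α k := by
        refine sum_congr rfl fun j hj => ?_
        rw [h j (mem_range_succ_iff.1 hj), mul_sum]
        exact sum_congr rfl fun k _ => by rw [div_mul_div_comm, mul_div_right_comm]
    _ = ∑ k ∈ range (n + 1), ∑ j ∈ Ico k (n + 1),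
          a ^ j * q ^ j ^ 2 / (qPoch q q (n - j) *
            (qPoch q q (j - k) * qPoch (a * q) q (j + k))) * α k := by
        simp only [range_eq_Ico]
        exact (sum_Ico_Ico_comm ..).symm
    _ = _ := by
        refine sum_congr rfl fun k hk => ?_
        have hkn := mem_range_succ_iff.1 hk
        rw [← sum_mul, sum_Ico_bailey_kernel hkn (qPoch_ne_zero_of_le (n.sub_le k) hq)
          (qPoch_ne_zero_of_le (by omega) ha)]

end BaileyLemma

theorem stmt2_general (n : ℕ) (a q : ℂ) (hq : qPoch q q n ≠ 0) (ha : qPoch (a * q) q (2 * n) ≠ 0)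
    (α β : ℕ → ℂ) (hpair : IsBaileyPairUpTo a q n α β) :
    qPoch (a * q) q n * ∑ k ∈ range (n + 1),
        qPoch (q ^ (-(n : ℤ))) q k * (-1) ^ k * (q ^ (k * (k + 1) / 2 + n * k) * a ^ k) * β k =
      ∑ k ∈ range (n + 1),
        qPoch (q ^ (-(n : ℤ))) q k / qPoch (a * q ^ (n + 1)) q k * (-1) ^ k *
          (q ^ (k * (k + 1) / 2 + n * k) * a ^ k) * α k := by
  have hweight {k : ℕ} (hk : k ∈ range (n + 1)) :
      qPoch (q ^ (-(n : ℤ))) q k * (-1) ^ k * q ^ (k * (k + 1) / 2 + n * k) =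
        qPoch q q n * q ^ k ^ 2 / qPoch q q (n - k) :=
    eq_div_of_mul_eq (qPoch_ne_zero_of_le (n.sub_le k) hq)
      (qPoch_zpow_neg_mul_qPoch q (mem_range_succ_iff.1 hk))
  have han : qPoch (a * q) q n ≠ 0 := qPoch_ne_zero_of_le (by omega) ha
  calc _ = qPoch q q n * qPoch (a * q) q n *
          ∑ j ∈ range (n + 1), a ^ j * q ^ j ^ 2 / qPoch q q (n - j) * β j := by
        rw [mul_sum, mul_sum]
        refine sum_congr rfl fun k hk => ?_
        linear_combination qPoch (a * q) q n * a ^ k * β k * hweight hk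
    _ = qPoch q q n * qPoch (a * q) q n * ∑ k ∈ range (n + 1),
          a ^ k * q ^ k ^ 2 / (qPoch q q (n - k) * qPoch (a * q) q (n + k)) * α k := by
        rw [hpair.bailey_lemma hq ha]
    _ = _ := by
        rw [mul_sum]
        refine sum_congr rfl fun k hk => ?_
        calc _ = qPoch q q n * q ^ k ^ 2 / qPoch q q (n - k) *
                (a ^ k * α k / qPoch (a * q ^ (n + 1)) q k) := by
              rw [qPoch_add, mul_assoc a, ← pow_succ']
              field_simp
          _ = _ := by
              rw [← hweight hk]
              ring

theorem stmt2 (n : ℕ) (q : ℂ) (hq : ∀ j : ℕ, 1 ≤ j → j ≤ 2 * n + 1 → q ^ j ≠ 1) (α β : ℕ → ℂ)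
    (hpair : ∀ j ≤ n, β j = ∑ k ∈ Finset.range (j + 1),
      α k / (qPoch q q (j - k) * qPoch (q ^ 2) q (j + k))) :
    qPoch (q ^ 2) q n * ∑ k ∈ Finset.range (n + 1),
        qPoch (q ^ (-(n : ℤ))) q k * (-1) ^ k * q ^ (k * (k + 1) / 2 + (n + 1) * k) * β k =
      ∑ k ∈ Finset.range (n + 1),
        qPoch (q ^ (-(n : ℤ))) q k / qPoch (q ^ (n + 2)) q k * (-1) ^ k *
          q ^ (k * (k + 1) / 2 + (n + 1) * k) * α k := by
  have hqn : qPoch q q n ≠ 0 := qPoch_ne_zero_iff.2 fun i hi => by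
    simpa only [← pow_succ'] using hq (i + 1) (by omega) (by omega)
  have hqq : qPoch (q * q) q (2 * n) ≠ 0 := qPoch_ne_zero_iff.2 fun i hi => by
    simpa only [← sq, ← pow_add] using hq (2 + i) (by omega) (by omega)
  simpa only [← sq, ← pow_succ', ← pow_add, add_assoc, ← add_one_mul] using
    stmt2_general n q q hqn hqq α β (by simpa only [IsBaileyPairUpTo, ← sq] using hpair)
end

section
/- Let m ≥ 2 and 0 ≤ a ≤ m−2 be integers, and let q be a primitive Nth root of unity for some integer N ≥ 1. Then Σ_{k=0}^{N−1} (1 − q^{(a+1)(2k+1)})·q^{mk² + (m−a−1)k} = 0. -/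
open Finset

/-! Write `Q(k) = m k² + (m - a - 1) k`. Then `Q(-1 - k) = Q(k) + (a + 1)(2k + 1)`, so the sum is
`∑ q ^ Q(k) - ∑ q ^ Q(-1 - k)`. Since `q ^ N = 1`, exponents matter only modulo `N`, and
`k ↦ -1 - k` permutes the residues modulo `N`; hence the two sums agree. -/

theorem quadratic_reflect_modEq {N j k : ℕ} (b c : ℕ) (hjk : j + k + 1 = N) :
    (b + c) * j ^ 2 + c * j ≡ b * (2 * k + 1) + ((b + c) * k ^ 2 + c * k) [MOD N] := by
  have hj : (j : ZMod N) = -1 - k := by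
    have hsum : ((j + k + 1 : ℕ) : ZMod N) = 0 := by rw [hjk, ZMod.natCast_self]
    push_cast at hsum
    linear_combination hsum
  rw [← ZMod.natCast_eq_natCast_iff]
  push_cast
  rw [hj]
  ring

theorem sum_pow_quadratic_reflect {R : Type*} [Semiring R] {q : R} {N : ℕ} (hq : q ^ N = 1)
    (b c : ℕ) :
    ∑ k ∈ range N, q ^ (b * (2 * k + 1) + ((b + c) * k ^ 2 + c * k)) =
      ∑ k ∈ range N, q ^ ((b + c) * k ^ 2 + c * k) := by
  rw [← sum_range_reflect (fun k ↦ q ^ ((b + c) * k ^ 2 + c * k))]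
  refine sum_congr rfl fun k hk ↦ ?_
  have hreflect : N - 1 - k + k + 1 = N := by
    have := mem_range.mp hk
    omega
  exact (pow_eq_pow_of_modEq (quadratic_reflect_modEq b c hreflect) hq).symm

theorem stmt4_general {R : Type*} [Ring R] {m a N : ℕ} (ha : a < m) {q : R} (hq : q ^ N = 1) :
    ∑ k ∈ range N,
      (1 - q ^ ((a + 1) * (2 * k + 1))) * q ^ (m * k ^ 2 + (m - a - 1) * k) = 0 := by
  obtain ⟨c, rfl⟩ := Nat.exists_eq_add_of_le (Nat.succ_le_of_lt ha)
  have hc : a + 1 + c - a - 1 = c := by omega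
  simp only [Nat.succ_eq_add_one, hc, sub_mul, one_mul, ← pow_add, sum_sub_distrib]
  rw [sum_pow_quadratic_reflect hq, sub_self]

theorem stmt4 (m a N : ℕ) (hm : 2 ≤ m) (ha : a ≤ m - 2) (hN : 1 ≤ N) (q : ℂ)
    (hqN : q ^ N = 1) (hprim : ∀ j : ℕ, 1 ≤ j → j < N → q ^ j ≠ 1) :
    ∑ k ∈ Finset.range N,
      (1 - q ^ ((a + 1) * (2 * k + 1))) * q ^ (m * k ^ 2 + (m - a - 1) * k) = 0 :=
  stmt4_general (by omega) hqN
end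

section
/- Let m ≥ 2 be an integer and let M, N be coprime integers with N odd and positive. Then lim_{t→0⁺} ((2m−1)/2)·Σ_{k=0}^{∞} χ_{4m−2}(k)·e^{(2πiM/N − t)·k²/(8(2m−1))} = −(1/(8(2m−1)N²))·Σ_{k=0}^{(4m−2)N} k²·χ_{4m−2}(k)·e^{2πiMk²/(8(2m−1)N)}. -/
open Finset

/-- The odd periodic function `χ_{4m-2}`. -/
def chiP (m : ℕ) (k : ℤ) : ℤ :=
  if k % (4 * m - 2) = (2 * (m : ℤ) - 3) % (4 * m - 2) then 1
  else if k % (4 * m - 2) = (2 * (m : ℤ) + 1) % (4 * m - 2) then -1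
  else 0

/-!
A periodic sequence with vanishing sum over a period is the second difference `Δ²b` of a bounded
sequence `b`. Two summations by parts turn `∑ e^{-sk²} Δ²b(k)` into boundary terms plus
`∑ Δ²(e^{-sk²}) b(k+2)`; the boundary terms tend to `-Δb(0)`, and the last series tends to `0` by
dominated convergence because `|∂²ₓ e^{-sx²}| ≤ 8 / (1 + x²)` uniformly in `s ∈ [0, 1]`. For an odd
sequence of period `P`, the reflection `k ↦ P - k` expresses `Δb(0)`, a first moment, through the
second moment. The theorem is the case `k ↦ χ(k) e^{2πiMk²/(8(2m-1)N)}`, of period `(4m-2)N`.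
-/

open Filter Topology

section SummationByParts

theorem summable_fwdDiff {E : Type*} [AddCommGroup E] [TopologicalSpace E]
    [IsTopologicalAddGroup E] {φ : ℕ → E} (hφ : Summable φ) : Summable (fwdDiff 1 φ) :=
  ((summable_nat_add_iff 1).2 hφ).sub hφ

theorem tsum_smul_fwdDiff {R E : Type*} [Ring R] [AddCommGroup E] [Module R E]
    [TopologicalSpace E] [IsTopologicalAddGroup E] [T2Space E] {φ : ℕ → R} {a : ℕ → E}
    (h₀ : Summable fun k ↦ φ k • a k) (h₁ : Summable fun k ↦ φ k • a (k + 1)) :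
    ∑' k, φ k • fwdDiff 1 a k = -(φ 0 • a 0) - ∑' k, fwdDiff 1 φ k • a (k + 1) := by
  have h₀' : Summable fun k ↦ φ (k + 1) • a (k + 1) := (summable_nat_add_iff 1).2 h₀
  simp only [fwdDiff, smul_sub, sub_smul]
  rw [h₁.tsum_sub h₀, h₀'.tsum_sub h₁, h₀.tsum_eq_zero_add]
  abel

variable {E : Type*} [NormedAddCommGroup E] [NormedSpace ℝ E] [CompleteSpace E]

theorem summable_smul_of_norm_le {ι : Type*} {φ : ι → ℝ} {b : ι → E} {C : ℝ} (hφ : Summable φ)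
    (hb : ∀ i, ‖b i‖ ≤ C) : Summable fun i ↦ φ i • b i := by
  refine .of_norm_bounded (hφ.norm.mul_right C) fun i ↦ ?_
  rw [norm_smul]
  gcongr
  exact hb i

theorem tsum_smul_fwdDiff_fwdDiff {φ : ℕ → ℝ} {b : ℕ → E} {C : ℝ} (hφ : Summable φ)
    (hb : ∀ k, ‖b k‖ ≤ C) :
    ∑' k, φ k • fwdDiff 1 (fwdDiff 1 b) k =
      fwdDiff 1 φ 0 • b 1 - φ 0 • fwdDiff 1 b 0 +
        ∑' k, fwdDiff 1 (fwdDiff 1 φ) k • b (k + 2) := by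
  have hΔb (k : ℕ) : ‖fwdDiff 1 b k‖ ≤ C + C := norm_sub_le_of_le (hb _) (hb _)
  have hΔφ : Summable (fwdDiff 1 φ) := summable_fwdDiff hφ
  have first_parts := tsum_smul_fwdDiff (summable_smul_of_norm_le hφ hΔb)
    (summable_smul_of_norm_le hφ fun k ↦ hΔb (k + 1))
  have second_parts := tsum_smul_fwdDiff (a := fun k ↦ b (k + 1))
    (summable_smul_of_norm_le hΔφ fun k ↦ hb (k + 1))
    (summable_smul_of_norm_le hΔφ fun k ↦ hb (k + 2))
  simp only [fwdDiff_comp_add] at second_parts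
  rw [first_parts, second_parts]
  abel

end SummationByParts

section Periodic

theorem fwdDiff_sum_range {E : Type*} [AddCommGroup E] (a : ℕ → E) :
    fwdDiff 1 (fun n ↦ ∑ k ∈ range n, a k) = a := by
  ext n
  simp [fwdDiff, sum_range_succ]

theorem sum_range_sum_range_add_sum_nsmul {E : Type*} [AddCommMonoid E] (a : ℕ → E) (n : ℕ) :
    ∑ j ∈ range n, ∑ k ∈ range j, a k + ∑ k ∈ range n, (k + 1) • a k =
      n • ∑ k ∈ range n, a k := by
  induction n with
  | zero => simp
  | succ n ih =>
    rw [sum_range_succ, sum_range_succ (fun k ↦ (k + 1) • a k), add_add_add_comm, ih,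
      sum_range_succ a, smul_add, succ_nsmul, succ_nsmul]
    abel

theorem periodic_sum_range {E : Type*} [AddCommMonoid E] {a : ℕ → E} {P : ℕ}
    (ha : Function.Periodic a P) (hsum : ∑ k ∈ range P, a k = 0) :
    Function.Periodic (fun n ↦ ∑ k ∈ range n, a k) P := by
  intro n
  simp only [add_comm n P, sum_range_add, hsum, zero_add]
  exact sum_congr rfl fun k _ ↦ by rw [add_comm, ha]

theorem exists_norm_le_of_periodic {E : Type*} [SeminormedAddGroup E] {b : ℕ → E} {P : ℕ}
    (hP : P ≠ 0) (hb : Function.Periodic b P) : ∃ C, ∀ k, ‖b k‖ ≤ C := by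
  obtain ⟨C, hC⟩ := ((range P).finite_toSet.image fun k ↦ ‖b k‖).bddAbove
  refine ⟨C, fun k ↦ ?_⟩
  rw [← hb.map_mod_nat k]
  exact hC ⟨k % P, by simpa using Nat.mod_lt k (Nat.pos_of_ne_zero hP), rfl⟩

theorem exists_bounded_fwdDiff_fwdDiff_eq {E : Type*} [NormedAddCommGroup E] [NormedSpace ℝ E]
    {a : ℕ → E} {P : ℕ} (hP : P ≠ 0) (ha : Function.Periodic a P)
    (hsum : ∑ k ∈ range P, a k = 0) :
    ∃ b : ℕ → E, (∃ C, ∀ k, ‖b k‖ ≤ C) ∧ fwdDiff 1 (fwdDiff 1 b) = a ∧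
      fwdDiff 1 b 0 = (P : ℝ)⁻¹ • ∑ k ∈ range P, k • a k := by
  -- The constant of integration `c` is chosen so that the primitive `A` of `a` has mean zero.
  set c : E := (P : ℝ)⁻¹ • ∑ k ∈ range P, k • a k with hc
  set A : ℕ → E := fun n ↦ c + ∑ k ∈ range n, a k with hA
  have hΔA : fwdDiff 1 A = a := by
    ext n
    simp [hA, fwdDiff, sum_range_succ]
  have hA_periodic : Function.Periodic A P := fun n ↦
    congrArg (c + ·) (periodic_sum_range ha hsum n)
  have hA_sum : ∑ k ∈ range P, A k = 0 := by
    have hdouble := sum_range_sum_range_add_sum_nsmul a P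
    simp only [add_smul, one_smul, sum_add_distrib, hsum, add_zero, smul_zero] at hdouble
    have hPc : P • c = ∑ k ∈ range P, k • a k := by
      rw [hc, ← Nat.cast_smul_eq_nsmul ℝ, smul_inv_smul₀ (Nat.cast_ne_zero.2 hP)]
    rw [sum_add_distrib, sum_const, card_range, hPc, add_comm, hdouble]
  refine ⟨fun n ↦ ∑ k ∈ range n, A k,
    exists_norm_le_of_periodic hP (periodic_sum_range hA_periodic hA_sum), ?_, ?_⟩
  · rw [fwdDiff_sum_range, hΔA]
  · rw [fwdDiff_sum_range]
    simp [hA]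

end Periodic

section OddPeriodic

variable {E : Type*} [AddCommGroup E] {f : ℤ → E} {P : ℕ}

theorem sum_range_add_reflect_smul_eq_zero {R : Type*} [Semiring R] [Module R E]
    (hodd : Function.Odd f) (hper : Function.Periodic f P) (g : ℕ → R) :
    ∑ k ∈ range (P + 1), (g k + g (P - k)) • f k = 0 := by
  have hreflect : ∑ k ∈ range (P + 1), g (P - k) • f k = -∑ k ∈ range (P + 1), g k • f k := by
    rw [← sum_range_reflect, ← sum_neg_distrib]
    refine sum_congr rfl fun k hk ↦ ?_
    have hkP : k ≤ P := Nat.lt_succ_iff.1 (mem_range.1 hk)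
    rw [Nat.add_sub_cancel, Nat.sub_sub_self hkP, Nat.cast_sub hkP, hper.sub_eq', hodd, smul_neg]
  simp only [add_smul, sum_add_distrib, hreflect, add_neg_cancel]

variable [IsAddTorsionFree E]

theorem map_period_eq_zero_of_odd (hodd : Function.Odd f) (hper : Function.Periodic f P) :
    f P = 0 := by
  rw [hper.eq, hodd.map_zero]

theorem sum_range_eq_zero_of_odd_periodic (hodd : Function.Odd f) (hper : Function.Periodic f P) :
    ∑ k ∈ range P, f k = 0 := by
  have h := sum_range_add_reflect_smul_eq_zero hodd hper fun _ ↦ 1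
  rwa [← smul_sum, sum_range_succ, map_period_eq_zero_of_odd hodd hper, add_zero,
    nsmul_eq_zero_iff_right two_ne_zero] at h

theorem sum_sq_smul_of_odd_periodic (hodd : Function.Odd f) (hper : Function.Periodic f P) :
    ∑ k ∈ range (P + 1), k ^ 2 • f k = P • ∑ k ∈ range P, k • f k := by
  have hfP := map_period_eq_zero_of_odd hodd hper
  have hmoment₀ : ∑ k ∈ range (P + 1), f k = 0 := by
    rw [sum_range_succ, hfP, add_zero, sum_range_eq_zero_of_odd_periodic hodd hper]
  have hmoment₁ : ∑ k ∈ range (P + 1), k • f k = ∑ k ∈ range P, k • f k := by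
    rw [sum_range_succ, hfP, smul_zero, add_zero]
  have hexpand : ∀ k ∈ range (P + 1), P ^ 2 • f k + 2 • k ^ 2 • f k =
      (k ^ 2 + (P - k) ^ 2) • f k + 2 • P • k • f k := by
    intro k hk
    obtain ⟨j, rfl⟩ := Nat.exists_eq_add_of_le (Nat.lt_succ_iff.1 (mem_range.1 hk))
    rw [Nat.add_sub_cancel_left]
    module
  have h := sum_congr rfl hexpand
  simp only [sum_add_distrib, ← smul_sum,
    sum_range_add_reflect_smul_eq_zero hodd hper (fun k ↦ k ^ 2), hmoment₀, hmoment₁, smul_zero,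
    zero_add] at h
  exact nsmul_right_injective two_ne_zero h

end OddPeriodic

section ConvergenceFactor

variable {ι : Type*} {l : Filter ι} {φ : ι → ℕ → ℝ}

/-- Convergence factors in the sense of Hardy: real sequences `φ i` tending pointwise to `1`, by
which a bounded divergent series is multiplied before passing to the limit along `l`. Domination is
imposed on the second differences, which is what two summations by parts require. -/
structure IsConvergenceFactor (l : Filter ι) (φ : ι → ℕ → ℝ) : Prop where
  summable : ∀ᶠ i in l, Summable (φ i)
  tendsto_one : ∀ k, Tendsto (φ · k) l (𝓝 1)
  exists_bound : ∃ g : ℕ → ℝ, Summable g ∧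
    ∀ᶠ i in l, ∀ k, ‖fwdDiff 1 (fwdDiff 1 (φ i)) k‖ ≤ g k

namespace IsConvergenceFactor

theorem tendsto_fwdDiff (hφ : IsConvergenceFactor l φ) (k : ℕ) :
    Tendsto (fun i ↦ fwdDiff 1 (φ i) k) l (𝓝 0) := by
  simpa [fwdDiff] using (hφ.tendsto_one (k + 1)).sub (hφ.tendsto_one k)

theorem tendsto_fwdDiff_fwdDiff (hφ : IsConvergenceFactor l φ) (k : ℕ) :
    Tendsto (fun i ↦ fwdDiff 1 (fwdDiff 1 (φ i)) k) l (𝓝 0) := by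
  rw [← sub_zero (0 : ℝ)]
  exact (hφ.tendsto_fwdDiff (k + 1)).sub (hφ.tendsto_fwdDiff k)

variable {E : Type*} [NormedAddCommGroup E] [NormedSpace ℝ E] [CompleteSpace E]

theorem tendsto_tsum_fwdDiff_fwdDiff_smul (hφ : IsConvergenceFactor l φ) {b : ℕ → E} {C : ℝ}
    (hb : ∀ k, ‖b k‖ ≤ C) :
    Tendsto (fun i ↦ ∑' k, fwdDiff 1 (fwdDiff 1 (φ i)) k • b k) l (𝓝 0) := by
  obtain ⟨g, hg, hφg⟩ := hφ.exists_bound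
  rw [← tsum_zero (β := ℕ)]
  refine tendsto_tsum_of_dominated_convergence (hg.mul_right C) (fun k ↦ ?_) ?_
  · simpa using (hφ.tendsto_fwdDiff_fwdDiff k).smul_const (b k)
  · filter_upwards [hφg] with i hi k
    rw [norm_smul]
    exact mul_le_mul (hi k) (hb k) (norm_nonneg _) ((norm_nonneg _).trans (hi k))

theorem tendsto_tsum_smul_fwdDiff_fwdDiff (hφ : IsConvergenceFactor l φ) {b : ℕ → E} {C : ℝ}
    (hb : ∀ k, ‖b k‖ ≤ C) :
    Tendsto (fun i ↦ ∑' k, φ i k • fwdDiff 1 (fwdDiff 1 b) k) l (𝓝 (-fwdDiff 1 b 0)) := by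
  have hlim := (((hφ.tendsto_fwdDiff 0).smul_const (b 1)).sub
    ((hφ.tendsto_one 0).smul_const (fwdDiff 1 b 0))).add
    (hφ.tendsto_tsum_fwdDiff_fwdDiff_smul fun k ↦ hb (k + 2))
  simp only [zero_smul, one_smul, zero_sub, add_zero] at hlim
  refine hlim.congr' ?_
  filter_upwards [hφ.summable] with i hi using (tsum_smul_fwdDiff_fwdDiff hi hb).symm

theorem tendsto_tsum_smul_of_periodic (hφ : IsConvergenceFactor l φ) {a : ℕ → E} {P : ℕ}
    (hP : P ≠ 0) (ha : Function.Periodic a P) (hsum : ∑ k ∈ range P, a k = 0) :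
    Tendsto (fun i ↦ ∑' k, φ i k • a k) l (𝓝 (-((P : ℝ)⁻¹ • ∑ k ∈ range P, k • a k))) := by
  obtain ⟨b, ⟨C, hb⟩, hΔΔb, hΔb⟩ := exists_bounded_fwdDiff_fwdDiff_eq hP ha hsum
  simpa only [hΔΔb, hΔb] using hφ.tendsto_tsum_smul_fwdDiff_fwdDiff hb

theorem tendsto_tsum_smul_of_odd_periodic (hφ : IsConvergenceFactor l φ) {f : ℤ → E} {P : ℕ}
    (hP : P ≠ 0) (hodd : Function.Odd f) (hper : Function.Periodic f P) :
    Tendsto (fun i ↦ ∑' k : ℕ, φ i k • f k) l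
      (𝓝 (-(((P : ℝ) ^ 2)⁻¹ • ∑ k ∈ range (P + 1), k ^ 2 • f k))) := by
  have hper_nat : Function.Periodic (fun k : ℕ ↦ f k) P := fun k ↦ by
    simpa using hper k
  have : IsAddTorsionFree E := .of_isTorsionFree ℝ E
  have hmoment : ((P : ℝ) ^ 2)⁻¹ • ∑ k ∈ range (P + 1), k ^ 2 • f k =
      (P : ℝ)⁻¹ • ∑ k ∈ range P, k • f k := by
    rw [sum_sq_smul_of_odd_periodic hodd hper, ← Nat.cast_smul_eq_nsmul ℝ, smul_smul]
    congr 1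
    field_simp
  rw [hmoment]
  exact hφ.tendsto_tsum_smul_of_periodic hP hper_nat (sum_range_eq_zero_of_odd_periodic hodd hper)

end IsConvergenceFactor

end ConvergenceFactor

section Gaussian

theorem norm_fwdDiff_fwdDiff_le {E : Type*} [NormedAddCommGroup E] [NormedSpace ℝ E]
    {f f' f'' : ℝ → E} {x h C : ℝ} (hh : 0 ≤ h) (hf : ∀ y, HasDerivAt f (f' y) y)
    (hf' : ∀ y, HasDerivAt f' (f'' y) y) (hC : ∀ y, x ≤ y → ‖f'' y‖ ≤ C) :
    ‖fwdDiff h (fwdDiff h f) x‖ ≤ C * h ^ 2 := by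
  have hΔf (y : ℝ) : HasDerivAt (fwdDiff h f) (fwdDiff h f' y) y :=
    ((hf (y + h)).comp_add_const y h).sub (hf y)
  have hΔf' (y : ℝ) (hy : x ≤ y) : ‖fwdDiff h f' y‖ ≤ C * h := by
    simpa [fwdDiff, abs_of_nonneg hh] using
      (convex_Ici x).norm_image_sub_le_of_norm_hasDerivWithin_le
        (fun z _ ↦ (hf' z).hasDerivWithinAt) hC hy (hy.trans (le_add_of_nonneg_right hh))
  simpa [abs_of_nonneg hh, mul_assoc, sq, fwdDiff] using
    (convex_Ici x).norm_image_sub_le_of_norm_hasDerivWithin_le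
      (fun z _ ↦ (hΔf z).hasDerivWithinAt) hΔf' Set.self_mem_Ici (le_add_of_nonneg_right hh)

theorem hasDerivAt_exp_neg_mul_sq (s x : ℝ) :
    HasDerivAt (fun x ↦ Real.exp (-s * x ^ 2)) (-2 * s * x * Real.exp (-s * x ^ 2)) x := by
  refine ((hasDerivAt_pow 2 x).const_mul (-s)).exp.congr_deriv ?_
  norm_num
  ring

theorem hasDerivAt_mul_exp_neg_mul_sq (s x : ℝ) :
    HasDerivAt (fun x ↦ -2 * s * x * Real.exp (-s * x ^ 2))
      ((4 * s ^ 2 * x ^ 2 - 2 * s) * Real.exp (-s * x ^ 2)) x := by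
  refine (((hasDerivAt_id' x).const_mul (-2 * s)).mul
    (hasDerivAt_exp_neg_mul_sq s x)).congr_deriv ?_
  ring

theorem norm_sub_mul_exp_neg_mul_sq_le {s : ℝ} (hs₀ : 0 ≤ s) (hs₁ : s ≤ 1) (x : ℝ) :
    ‖(4 * s ^ 2 * x ^ 2 - 2 * s) * Real.exp (-s * x ^ 2)‖ ≤ 8 / (1 + x ^ 2) := by
  have hy : 0 ≤ s * x ^ 2 := by positivity
  have hexp := Real.quadratic_le_exp_of_nonneg hy
  have hcoeff : |4 * s ^ 2 * x ^ 2 - 2 * s| ≤ 2 * s * (1 + 2 * (s * x ^ 2)) := by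
    rw [abs_le]
    constructor <;> nlinarith [mul_nonneg hs₀ hy]
  rw [norm_mul, Real.norm_eq_abs, Real.norm_of_nonneg (Real.exp_nonneg _), neg_mul, Real.exp_neg,
    ← div_eq_mul_inv, div_le_div_iff₀ (Real.exp_pos _) (by positivity)]
  calc |4 * s ^ 2 * x ^ 2 - 2 * s| * (1 + x ^ 2)
      ≤ 2 * s * (1 + 2 * (s * x ^ 2)) * (1 + x ^ 2) := by gcongr
    _ = 2 * (1 + 2 * (s * x ^ 2)) * (s + s * x ^ 2) := by ring
    _ ≤ 2 * (1 + 2 * (s * x ^ 2)) * (1 + s * x ^ 2) := by gcongr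
    _ ≤ 8 * Real.exp (s * x ^ 2) := by nlinarith

theorem norm_fwdDiff_fwdDiff_exp_neg_mul_sq_le {s : ℝ} (hs₀ : 0 ≤ s) (hs₁ : s ≤ 1) (k : ℕ) :
    ‖fwdDiff 1 (fwdDiff 1 fun n : ℕ ↦ Real.exp (-s * (n : ℝ) ^ 2)) k‖ ≤ 8 / (1 + (k : ℝ) ^ 2) := by
  have hbound : ∀ y, (k : ℝ) ≤ y →
      ‖(4 * s ^ 2 * y ^ 2 - 2 * s) * Real.exp (-s * y ^ 2)‖ ≤ 8 / (1 + (k : ℝ) ^ 2) := fun y hy ↦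
    (norm_sub_mul_exp_neg_mul_sq_le hs₀ hs₁ y).trans (by gcongr)
  simpa [fwdDiff] using norm_fwdDiff_fwdDiff_le zero_le_one (hasDerivAt_exp_neg_mul_sq s)
    (hasDerivAt_mul_exp_neg_mul_sq s) hbound

theorem summable_div_one_add_sq (c : ℝ) : Summable fun k : ℕ ↦ c / (1 + (k : ℝ) ^ 2) := by
  have h : Summable fun k : ℕ ↦ 1 / (1 + (k : ℝ) ^ 2) := by
    refine .of_norm_bounded_eventually_nat (Real.summable_one_div_nat_pow.2 one_lt_two) ?_
    filter_upwards [eventually_gt_atTop 0] with k hk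
    rw [Real.norm_of_nonneg (by positivity)]
    gcongr
    exact le_add_of_nonneg_left zero_le_one
  simpa [div_eq_mul_inv] using h.mul_left c

theorem isConvergenceFactor_exp_neg_mul_sq :
    IsConvergenceFactor (𝓝[>] (0 : ℝ)) fun s k ↦ Real.exp (-s * (k : ℝ) ^ 2) where
  summable := by
    filter_upwards [self_mem_nhdsWithin] with s hs
    simpa using Real.summable_exp_nat_mul_of_ge (neg_lt_zero.2 hs)
      fun k ↦ (by exact_mod_cast Nat.le_self_pow two_ne_zero k : (k : ℝ) ≤ (k : ℝ) ^ 2)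
  tendsto_one k := by
    have hcont : Continuous fun s : ℝ ↦ Real.exp (-s * (k : ℝ) ^ 2) := by fun_prop
    simpa using (hcont.tendsto 0).mono_left nhdsWithin_le_nhds
  exists_bound := by
    refine ⟨_, summable_div_one_add_sq 8, ?_⟩
    filter_upwards [Ioc_mem_nhdsGT zero_lt_one] with s hs k
    exact norm_fwdDiff_fwdDiff_exp_neg_mul_sq_le hs.1.le hs.2 k

theorem tendsto_div_const_nhdsGT_zero {c : ℝ} (hc : 0 < c) :
    Tendsto (fun t : ℝ ↦ t / c) (𝓝[>] 0) (𝓝[>] 0) := by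
  refine tendsto_nhdsWithin_iff.2 ⟨?_, ?_⟩
  · simpa using (tendsto_nhdsWithin_of_tendsto_nhds (a := (0 : ℝ)) tendsto_id).div_const c
  · filter_upwards [self_mem_nhdsWithin] with t ht using div_pos ht hc

end Gaussian

section Character

theorem chiP_periodic (m : ℕ) : Function.Periodic (chiP m) (4 * m - 2) := fun k ↦ by
  simp only [chiP, Int.add_emod_right]

theorem chiP_eq_sub {m : ℕ} (hm : 2 ≤ m) (k : ℤ) :
    chiP m k = (if (4 * m - 2 : ℤ) ∣ k - (2 * m - 3) then 1 else 0) -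
      (if (4 * m - 2 : ℤ) ∣ k + (2 * m - 3) then 1 else 0) := by
  have hdisjoint : (4 * m - 2 : ℤ) ∣ k - (2 * m - 3) → ¬ (4 * m - 2 : ℤ) ∣ k + (2 * m - 3) := by
    intro h h'
    have hdvd : (4 * m - 2 : ℤ) ∣ 4 :=
      (dvd_sub dvd_rfl (dvd_sub h' h)).trans (dvd_of_eq (by ring))
    have := Int.le_of_dvd (by norm_num) hdvd
    omega
  have hneg : (4 * m - 2 : ℤ) ∣ k - (2 * m + 1) ↔ (4 * m - 2 : ℤ) ∣ k + (2 * m - 3) := by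
    rw [show k + (2 * m - 3 : ℤ) = k - (2 * m + 1) + (4 * m - 2) by ring, dvd_add_self_right]
  simp only [chiP, Int.emod_eq_emod_iff_emod_sub_eq_zero, ← Int.dvd_iff_emod_eq_zero, hneg]
  split_ifs <;> simp_all

theorem chiP_odd {m : ℕ} (hm : 2 ≤ m) : Function.Odd (chiP m) := by
  intro k
  have hsub : -k - (2 * m - 3 : ℤ) = -(k + (2 * m - 3)) := by ring
  have hadd : -k + (2 * m - 3 : ℤ) = -(k - (2 * m - 3)) := by ring
  simp only [chiP_eq_sub hm, hsub, hadd, dvd_neg]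
  rw [neg_sub]

theorem odd_of_chiP_ne_zero {m : ℕ} {k : ℤ} (hk : chiP m k ≠ 0) : Odd k := by
  have htwo : (2 : ℤ) ∣ 4 * m - 2 := ⟨2 * m - 1, by ring⟩
  have hmod {c : ℤ} (hc : k % (4 * m - 2) = c % (4 * m - 2)) : k % 2 = c % 2 :=
    Int.ModEq.of_dvd htwo hc
  rw [Int.odd_iff]
  unfold chiP at hk
  split_ifs at hk with h₁ h₂
  · have := hmod h₁
    omega
  · have := hmod h₂
    omega
  · exact absurd rfl hk

/-- The twist of `χ_{4m-2}` by the quadratic phase `e^{2πiMk²/(8(2m-1)N)}`, which turns the theta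
series `∑ χ(k) q^{k²/(8(2m-1))}` at `q = e^{2πiM/N - t}` into a series with real Gaussian
weights. -/
noncomputable def twistedChi (m : ℕ) (M : ℤ) (N : ℕ) (k : ℤ) : ℂ :=
  chiP m k * Complex.exp (2 * Real.pi * Complex.I * M * (k : ℂ) ^ 2 / (8 * (2 * m - 1) * N))

theorem two_mul_natCast_sub_one_ne_zero {R : Type*} [Ring R] [CharZero R] (m : ℕ) :
    2 * (m : R) - 1 ≠ 0 := by
  have : (2 * m - 1 : ℤ) ≠ 0 := by omega
  exact_mod_cast this

theorem twistedChi_odd {m : ℕ} (hm : 2 ≤ m) (M : ℤ) (N : ℕ) :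
    Function.Odd (twistedChi m M N) := by
  intro k
  simp [twistedChi, (chiP_odd hm).eq k]

theorem twistedChi_periodic (m : ℕ) {M : ℤ} {N : ℕ} (hN : N ≠ 0) (hparity : Even M ∨ Odd N) :
    Function.Periodic (twistedChi m M N) ((4 * m - 2) * N) := by
  intro k
  have hchi : chiP m (k + (4 * m - 2) * N) = chiP m k := by
    rw [mul_comm]
    exact_mod_cast (chiP_periodic m).nat_mul N k
  rw [twistedChi, twistedChi, hchi]
  rcases eq_or_ne (chiP m k) 0 with hk | hk
  · simp [hk]
  have heven : Even (M * (k + (2 * m - 1) * N)) := by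
    have := odd_of_chiP_ne_zero hk
    grind
  obtain ⟨j, hj⟩ := heven
  have hj' : (M : ℂ) * (k + (2 * m - 1) * N) = j + j := by exact_mod_cast hj
  congr 1
  rw [Complex.exp_eq_exp_iff_exists_int]
  refine ⟨j, ?_⟩
  have hm0 := two_mul_natCast_sub_one_ne_zero (R := ℂ) m
  have hN0 : (N : ℂ) ≠ 0 := Nat.cast_ne_zero.2 hN
  push_cast
  field_simp
  linear_combination 4 * (2 * (m : ℂ) - 1) * N * hj'

theorem tendsto_tsum_exp_neg_mul_sq_smul_twistedChi {m : ℕ} (hm : 2 ≤ m) {M : ℤ} {N : ℕ}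
    (hN : N ≠ 0) (hparity : Even M ∨ Odd N) :
    Tendsto (fun s : ℝ ↦ ∑' k : ℕ, Real.exp (-s * (k : ℝ) ^ 2) • twistedChi m M N k) (𝓝[>] 0)
      (𝓝 (-(1 / (4 * (2 * (m : ℂ) - 1) ^ 2 * (N : ℂ) ^ 2)) *
        ∑ k ∈ range ((4 * m - 2) * N + 1), (k : ℂ) ^ 2 * twistedChi m M N k)) := by
  have hP : (4 * m - 2) * N ≠ 0 := mul_ne_zero (by omega) hN
  have hPcast : (((4 * m - 2) * N : ℕ) : ℤ) = (4 * m - 2) * N := by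
    push_cast [show 2 ≤ 4 * m by omega]
    rfl
  have hPsq : (((4 * m - 2) * N : ℕ) : ℂ) ^ 2 = 4 * (2 * (m : ℂ) - 1) ^ 2 * (N : ℂ) ^ 2 := by
    rw [← Int.cast_natCast, hPcast]
    push_cast
    ring
  have hlim := isConvergenceFactor_exp_neg_mul_sq.tendsto_tsum_smul_of_odd_periodic hP
    (twistedChi_odd hm M N) (hPcast ▸ twistedChi_periodic m hN hparity)
  convert! hlim using 2
  rw [← hPsq]
  simp [Complex.real_smul, nsmul_eq_mul]

theorem exp_smul_twistedChi (m : ℕ) (M : ℤ) {N : ℕ} (hN : N ≠ 0) (t : ℝ) (k : ℕ) :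
    Real.exp (-(t / (8 * (2 * m - 1))) * (k : ℝ) ^ 2) • twistedChi m M N k =
      chiP m k * Complex.exp
        ((2 * Real.pi * Complex.I * M / N - t) * ((k : ℂ) ^ 2 / (8 * (2 * m - 1)))) := by
  have hm0 := two_mul_natCast_sub_one_ne_zero (R := ℂ) m
  have hN0 : (N : ℂ) ≠ 0 := Nat.cast_ne_zero.2 hN
  rw [twistedChi, Complex.real_smul, mul_left_comm, Complex.ofReal_exp, ← Complex.exp_add]
  congr 2
  push_cast
  field_simp
  ring

end Character

theorem stmt8_general (m : ℕ) (hm : 2 ≤ m) (M : ℤ) (N : ℕ) (hN : 0 < N) (hparity : Even M ∨ Odd N) :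
    Tendsto
      (fun t : ℝ => ((2 * (m : ℂ) - 1) / 2) *
        ∑' k : ℕ, (chiP m k : ℂ) *
          Complex.exp ((2 * Real.pi * Complex.I * M / N - t) * ((k : ℂ) ^ 2 / (8 * (2 * m - 1)))))
      (𝓝[>] 0)
      (𝓝 (-(1 / (8 * (2 * (m : ℂ) - 1) * (N : ℂ) ^ 2)) *
        ∑ k ∈ range ((4 * m - 2) * N + 1),
          (k : ℂ) ^ 2 * (chiP m k : ℂ) *
            Complex.exp (2 * Real.pi * Complex.I * M * (k : ℂ) ^ 2 / (8 * (2 * m - 1) * N)))) := by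
  have hm0 := two_mul_natCast_sub_one_ne_zero (R := ℂ) m
  have hm_pos : (0 : ℝ) < 8 * (2 * m - 1) := by
    have : (2 : ℝ) ≤ m := by exact_mod_cast hm
    linarith
  have hlim := ((tendsto_tsum_exp_neg_mul_sq_smul_twistedChi hm hN.ne' hparity).comp
    (tendsto_div_const_nhdsGT_zero hm_pos)).const_mul ((2 * (m : ℂ) - 1) / 2)
  simp only [Function.comp_def, exp_smul_twistedChi m M hN.ne'] at hlim
  convert! hlim using 2
  simp only [twistedChi, Int.cast_natCast, mul_assoc, mul_sum]
  refine sum_congr rfl fun k _ ↦ ?_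
  field_simp
  ring

theorem stmt8 (m : ℕ) (hm : 2 ≤ m) (M : ℤ) (N : ℕ) (hN : 0 < N) (hNodd : Odd N)
    (hMN : IsCoprime M (N : ℤ)) :
    Filter.Tendsto
      (fun t : ℝ => ((2 * (m : ℂ) - 1) / 2) *
        ∑' k : ℕ, (chiP m k : ℂ) *
          Complex.exp ((2 * Real.pi * Complex.I * M / N - t) * ((k : ℂ) ^ 2 / (8 * (2 * m - 1)))))
      (nhdsWithin 0 (Set.Ioi 0))
      (nhds (-(1 / (8 * (2 * (m : ℂ) - 1) * (N : ℂ) ^ 2)) *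
        ∑ k ∈ Finset.range ((4 * m - 2) * N + 1),
          (k : ℂ) ^ 2 * (chiP m k : ℂ) *
            Complex.exp (2 * Real.pi * Complex.I * M * (k : ℂ) ^ 2 / (8 * (2 * m - 1) * N)))) :=
  stmt8_general m hm M N hN (.inr hNodd)
end
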